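/- Let 1 < p < q, M ≥ 1, and let f : [0,1) → (0,∞) be non-decreasing, bounded below by some ε > 0, and satisfying ((1/t) ∫_0^t f)·((1/t) ∫_0^t f^{-1/(q-1)})^{q-1} ≤ M for every t ∈ (0,1]. Set c = M^{1/(q-1)} and K = 1 − p^{1/(q-1)}·((q−p)/(q−1))·c. Then for every t ∈ (0,1]: K · (1/t) ∫_0^t f(s)^{-1/(q-1)} ((1/s) ∫_0^s f)^{-1/(p-1)+1/(q-1)} ds ≤ M^{1/(p-1)} · ((p−1)/(q−1)) · c^{-(q-p)/(p-1)} · ((1/t) ∫_0^t f)^{-1/(p-1)}. -/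

import Mathlib

open MeasureTheory Set intervalIntegral

open Filter Topology

/-!
Let `F` and `G` be the Hardy averages of `f` and `f^(-α)`, with `α = 1 / (q - 1)` and
`β = 1 / (p - 1)`. Since `s F' = f - F` and `s G' = f^(-α) - G` almost everywhere, the potential
`V = s G F^(α - β) - κ s F^(-β)` has an explicit derivative. The `A_q` condition says that
`G ≤ c F^(-α)` with `c = M^α`; as `F ≤ f`, inserting it in the term where `G` carries the factor
`f - F` leaves a function of `x = f / F`, up to the factor `F^(-β)`. The constant `κ` is chosen so
that `V' ≥ K f^(-α) F^(α - β)` becomes the tangent line inequality for `x ↦ x^(-α)` at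
`x = 1 + 1 / β = p`. Integrating over `(a, t)` and letting `a → 0` gives the theorem: the boundary
term at `a` vanishes in the limit and `V t ≤ c (α / β) t F(t)^(-β)`, again by `A_q`.
-/

section AbsolutelyContinuous

variable {a b : ℝ} {u : ℝ → ℝ}

theorem absolutelyContinuousOnInterval_comp_of_lipschitzOnWith {X Y : Type*}
    [PseudoMetricSpace X] [PseudoMetricSpace Y] {φ : X → Y} {v : ℝ → X} {K : NNReal} {s : Set X}
    (hφ : LipschitzOnWith K φ s) (hv : AbsolutelyContinuousOnInterval v a b)
    (hvs : MapsTo v (uIcc a b) s) :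
    AbsolutelyContinuousOnInterval (φ ∘ v) a b := by
  have hbound : Filter.Tendsto
      (fun E : ℕ × (ℕ → ℝ × ℝ) ↦ K * ∑ i ∈ Finset.range E.1, dist (v (E.2 i).1) (v (E.2 i).2))
      (AbsolutelyContinuousOnInterval.totalLengthFilter ⊓
        Filter.principal (AbsolutelyContinuousOnInterval.disjWithin a b)) (nhds 0) := by
    simpa using Filter.Tendsto.const_mul (K : ℝ) hv
  refine squeeze_zero' (.of_forall fun E ↦ Finset.sum_nonneg fun _ _ ↦ dist_nonneg) ?_ hbound
  filter_upwards [Filter.mem_inf_of_right (Filter.mem_principal_self _)] with E hE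
  rw [Finset.mul_sum]
  exact Finset.sum_le_sum fun i hi ↦
    hφ.dist_le_mul _ (hvs (hE.1 i hi).1) _ (hvs (hE.1 i hi).2)

theorem absolutelyContinuousOnInterval_rpow_const (hu : AbsolutelyContinuousOnInterval u a b)
    (hpos : ∀ x ∈ uIcc a b, 0 < u x) (r : ℝ) :
    AbsolutelyContinuousOnInterval (fun x ↦ u x ^ r) a b := by
  obtain ⟨x₀, hx₀, hmin⟩ := isCompact_uIcc.exists_isMinOn nonempty_uIcc hu.continuousOn
  obtain ⟨x₁, -, hmax⟩ := isCompact_uIcc.exists_isMaxOn nonempty_uIcc hu.continuousOn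
  have hsmooth : ContDiffOn ℝ 1 (fun y : ℝ ↦ y ^ r) (Icc (u x₀) (u x₁)) :=
    contDiffOn_id.rpow_const_of_ne fun y hy ↦ ((hpos x₀ hx₀).trans_le hy.1).ne'
  obtain ⟨K, hK⟩ := hsmooth.exists_lipschitzOnWith one_ne_zero (convex_Icc _ _) isCompact_Icc
  exact absolutelyContinuousOnInterval_comp_of_lipschitzOnWith hK hu
    fun x hx ↦ ⟨hmin hx, hmax hx⟩

theorem integral_le_sub_of_ae_le_deriv {h : ℝ → ℝ} (hab : a ≤ b)
    (hu : AbsolutelyContinuousOnInterval u a b) (hh : IntervalIntegrable h volume a b)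
    (hle : ∀ᵐ x, x ∈ Ioo a b → h x ≤ deriv u x) :
    ∫ x in a..b, h x ≤ u b - u a := by
  rw [← hu.integral_deriv_eq_sub, integral_of_le hab, integral_of_le hab,
    integral_Ioc_eq_integral_Ioo, integral_Ioc_eq_integral_Ioo]
  exact setIntegral_mono_ae_restrict (hh.1.mono_set Ioo_subset_Ioc_self)
    (hu.intervalIntegrable_deriv.1.mono_set Ioo_subset_Ioc_self)
    ((ae_restrict_iff' measurableSet_Ioo).2 hle)

end AbsolutelyContinuous

section IntervalIntegrable

variable {b s ε C T : ℝ} {f : ℝ → ℝ}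

theorem intervalIntegrable_of_mem_Ioc (hf : IntervalIntegrable f volume 0 T)
    (hs : s ∈ Ioc 0 T) : IntervalIntegrable f volume 0 s :=
  hf.mono_set (uIcc_subset_uIcc_left (Icc_subset_uIcc (Ioc_subset_Icc_self hs)))

theorem aestronglyMeasurable_of_forall_intervalIntegrable (hT : 0 < T)
    (hf : ∀ s ∈ Ioo 0 T, IntervalIntegrable f volume 0 s) :
    AEStronglyMeasurable f (volume.restrict (Ioc 0 T)) := by
  obtain ⟨u, -, hu, hlim⟩ := exists_seq_strictMono_tendsto' hT
  rw [← Measure.restrict_congr_set Ioo_ae_eq_Ioc]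
  exact (aecover_Ioo_of_Ioc tendsto_const_nhds hlim).aestronglyMeasurable fun n ↦
    (hf _ (hu n)).1.aestronglyMeasurable.mono_measure
      (Measure.restrict_mono_measure Measure.restrict_le_self _)

theorem intervalIntegrable_of_forall_integral_le (hb : 0 ≤ b) (hbT : b < T)
    (hf : ∀ s ∈ Ioo b T, IntervalIntegrable f volume 0 s) (hf_nonneg : ∀ x ∈ Ioo 0 T, 0 ≤ f x)
    (hC : ∀ s ∈ Ioo b T, ∫ x in (0 : ℝ)..s, f x ≤ C) : IntervalIntegrable f volume 0 T := by
  obtain ⟨u, -, hu, hlim⟩ := exists_seq_strictMono_tendsto' hbT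
  have hu0 : ∀ n, 0 ≤ u n := fun n ↦ hb.trans (hu n).1.le
  rw [intervalIntegrable_iff_integrableOn_Ioc_of_le (hb.trans hbT.le)]
  refine integrableOn_Ioc_of_intervalIntegral_norm_bounded_right (I := C)
    (fun n ↦ (hf _ (hu n)).1) hlim (.of_forall fun n ↦ ?_)
  have hnorm : ∫ x in Ioc 0 (u n), ‖f x‖ = ∫ x in Ioc 0 (u n), f x :=
    setIntegral_congr_fun measurableSet_Ioc fun x hx ↦
      Real.norm_of_nonneg (hf_nonneg x ⟨hx.1, hx.2.trans_lt (hu n).2⟩)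
  rw [hnorm, ← integral_of_le (hu0 n)]
  exact hC _ (hu n)

theorem intervalIntegrable_rpow_of_le {r : ℝ} (hε : 0 < ε) (hT : 0 ≤ T)
    (hf : AEStronglyMeasurable f (volume.restrict (Ioc 0 T)))
    (hεf : ∀ x ∈ Ioo 0 T, ε ≤ f x) (hr : r ≤ 0) :
    IntervalIntegrable (fun x ↦ f x ^ r) volume 0 T := by
  rw [intervalIntegrable_iff_integrableOn_Ioo_of_le hT]
  refine .of_bound measure_Ioo_lt_top
    ((hf.mono_set Ioo_subset_Ioc_self).aemeasurable.pow_const r).aestronglyMeasurable (ε ^ r) ?_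
  refine (ae_restrict_iff' measurableSet_Ioo).2 (.of_forall fun x hx ↦ ?_)
  have hfx : 0 < f x := hε.trans_le (hεf x hx)
  rw [Real.norm_of_nonneg (Real.rpow_nonneg hfx.le _)]
  exact Real.rpow_le_rpow_of_nonpos hε (hεf x hx) hr

end IntervalIntegrable

/-- The Hardy average `s ↦ (1 / s) ∫₀ˢ f` of `f`; it has the junk value `0` at `s = 0`. -/
noncomputable def hardyAverage (f : ℝ → ℝ) (s : ℝ) : ℝ :=
  (1 / s) * ∫ y in (0 : ℝ)..s, f y

section HardyAverage

variable {a s T : ℝ} {f g : ℝ → ℝ}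

theorem mul_hardyAverage (hs : s ≠ 0) (f : ℝ → ℝ) :
    s * hardyAverage f s = ∫ y in (0 : ℝ)..s, f y := by
  rw [hardyAverage, one_div, mul_inv_cancel_left₀ hs]

theorem hardyAverage_const (hs : s ≠ 0) (c : ℝ) : hardyAverage (fun _ ↦ c) s = c := by
  simp [hardyAverage, hs]

theorem hardyAverage_mono (hs : 0 ≤ s) (hf : IntervalIntegrable f volume 0 s)
    (hg : IntervalIntegrable g volume 0 s) (hfg : ∀ x ∈ Ioo 0 s, f x ≤ g x) :
    hardyAverage f s ≤ hardyAverage g s :=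
  mul_le_mul_of_nonneg_left (integral_mono_on_of_le_Ioo hs hf hg hfg) (one_div_nonneg.2 hs)

theorem hardyAverage_nonneg (hf : ∀ x ∈ Ioo 0 T, 0 ≤ f x) (hs : s ∈ Icc 0 T) :
    0 ≤ hardyAverage f s := by
  refine mul_nonneg (one_div_nonneg.2 hs.1) ?_
  rw [integral_of_le hs.1, integral_Ioc_eq_integral_Ioo]
  exact setIntegral_nonneg measurableSet_Ioo fun x hx ↦ hf x ⟨hx.1, hx.2.trans_le hs.2⟩

theorem hardyAverage_pos (hf : IntervalIntegrable f volume 0 T) (hpos : ∀ x ∈ Ioo 0 T, 0 < f x)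
    (hs : s ∈ Ioc 0 T) : 0 < hardyAverage f s :=
  mul_pos (one_div_pos.2 hs.1) <| intervalIntegral_pos_of_pos_on
    (intervalIntegrable_of_mem_Ioc hf hs) (fun x hx ↦ hpos x ⟨hx.1, hx.2.trans_le hs.2⟩) hs.1

theorem le_hardyAverage {c : ℝ} (hf : IntervalIntegrable f volume 0 T)
    (hc : ∀ x ∈ Ioo 0 T, c ≤ f x) (hs : s ∈ Ioc 0 T) : c ≤ hardyAverage f s := by
  simpa only [hardyAverage_const hs.1.ne'] using
    hardyAverage_mono hs.1.le intervalIntegrable_const (intervalIntegrable_of_mem_Ioc hf hs)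
      fun x hx ↦ hc x ⟨hx.1, hx.2.trans_le hs.2⟩

theorem hardyAverage_le_of_monotoneOn (hs : 0 < s) (hmono : MonotoneOn f (Icc 0 s)) :
    hardyAverage f s ≤ f s := by
  have hf : IntervalIntegrable f volume 0 s :=
    MonotoneOn.intervalIntegrable (by rwa [uIcc_of_le hs.le])
  simpa only [hardyAverage_const hs.ne'] using
    hardyAverage_mono hs.le hf (intervalIntegrable_const (c := f s)) fun x hx ↦
      hmono (Ioo_subset_Icc_self hx) (right_mem_Icc.2 hs.le) hx.2.le

theorem absolutelyContinuousOnInterval_hardyAverage (ha : 0 < a) (haT : a ≤ T)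
    (hf : IntervalIntegrable f volume 0 T) :
    AbsolutelyContinuousOnInterval (hardyAverage f) a T := by
  have hinv : ContDiffOn ℝ 1 (fun s : ℝ ↦ 1 / s) (uIcc a T) := by
    refine contDiffOn_const.div contDiffOn_id fun s hs ↦ ?_
    rw [uIcc_of_le haT] at hs
    exact (ha.trans_le hs.1).ne'
  have hsub : uIcc a T ⊆ uIcc 0 T := by
    rw [uIcc_of_le haT, uIcc_of_le (ha.le.trans haT)]
    exact Icc_subset_Icc_left ha.le
  exact hinv.absolutelyContinuousOnInterval.fun_mul
    ((hf.absolutelyContinuousOnInterval_intervalIntegral left_mem_uIcc).mono hsub)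

theorem continuousOn_hardyAverage (hf : IntervalIntegrable f volume 0 T) :
    ContinuousOn (hardyAverage f) (Ioc 0 T) := by
  refine (continuousOn_const.div continuousOn_id fun s hs ↦ hs.1.ne').mul
    ((continuousOn_primitive_interval' hf left_mem_uIcc).mono ?_)
  exact Ioc_subset_Icc_self.trans Icc_subset_uIcc

theorem ae_hasDerivAt_hardyAverage (hf : IntervalIntegrable f volume 0 T) :
    ∀ᵐ s, s ∈ Ioc 0 T → HasDerivAt (hardyAverage f) ((f s - hardyAverage f s) / s) s := by
  filter_upwards [hf.ae_hasDerivAt_integral] with s hs hsT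
  have hs0 : s ≠ 0 := hsT.1.ne'
  have hprim := hs (Icc_subset_uIcc (Ioc_subset_Icc_self hsT)) 0 left_mem_uIcc
  refine (((hasDerivAt_inv hs0).fun_mul hprim).congr_of_eventuallyEq
    (.of_forall fun x ↦ by simp [hardyAverage])).congr_deriv ?_
  rw [← mul_hardyAverage hs0]
  field

end HardyAverage

section PointwiseInequality

variable {α β c : ℝ}

theorem one_sub_mul_sub_one_le_rpow_neg {x : ℝ} (hx : 0 < x) (hα : 0 ≤ α) :
    1 - α * (x - 1) ≤ x ^ (-α) := by
  have hlog : α * Real.log x ≤ α * (x - 1) :=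
    mul_le_mul_of_nonneg_left (Real.log_le_sub_one_of_pos hx) hα
  calc 1 - α * (x - 1) ≤ Real.log x * -α + 1 := by linarith
    _ ≤ Real.exp (Real.log x * -α) := Real.add_one_le_exp _
    _ = x ^ (-α) := (Real.rpow_def_of_pos hx _).symm

/- The tangent line at `x = 1 + 1 / β` of the right-hand side, expanded in the two functions
`β * (x - 1)` and `1 - β * (x - 1)` that come out of the derivatives of Hardy averages. -/
theorem mul_sub_one_add_le_rpow_mul_rpow_neg {x : ℝ} (hx : 0 < x) (hα : 0 ≤ α) (hβ : 0 < β) :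
    β * (x - 1) + (1 + α / (β + 1)) * (1 - β * (x - 1)) ≤ (1 + 1 / β) ^ α * x ^ (-α) := by
  have hp : 0 < 1 + 1 / β := by positivity
  calc β * (x - 1) + (1 + α / (β + 1)) * (1 - β * (x - 1))
      = 1 - α * (x / (1 + 1 / β) - 1) := by field
    _ ≤ (x / (1 + 1 / β)) ^ (-α) := one_sub_mul_sub_one_le_rpow_neg (by positivity) hα
    _ = (1 + 1 / β) ^ α * x ^ (-α) := by
      rw [Real.div_rpow hx.le hp.le, Real.rpow_neg hp.le, div_inv_eq_mul, mul_comm]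

theorem mul_rpow_mul_rpow_le {f F G : ℝ} (hα : 0 ≤ α) (hαβ : α ≤ β) (hβ : 0 < β) (hc : 0 ≤ c)
    (hF : 0 < F) (hFf : F ≤ f) (hG : G ≤ c * F ^ (-α)) :
    (1 - (1 + 1 / β) ^ α * ((β - α) / β) * c) * (f ^ (-α) * F ^ (-β + α)) ≤
      (f ^ (-α) * F ^ (-β + α) + (-β + α) * G * F ^ (-β + α - 1) * (f - F)) -
        c * ((β - α) / β) * (1 + α / (β + 1)) *
          (F ^ (-β) + -β * F ^ (-β - 1) * (f - F)) := by
  obtain ⟨x, hx, rfl⟩ : ∃ x, 1 ≤ x ∧ f = x * F :=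
    ⟨f / F, (one_le_div hF).2 hFf, (div_mul_cancel₀ f hF.ne').symm⟩
  have hx0 : 0 < x := one_pos.trans_le hx
  set w := F ^ (-β)
  have hfF : (x * F) ^ (-α) * F ^ (-β + α) = w * x ^ (-α) := by
    rw [Real.mul_rpow hx0.le hF.le, mul_assoc, ← Real.rpow_add hF, neg_add_cancel_comm_assoc,
      mul_comm]
  have hFβ : F ^ (-β - 1) * (x * F - F) = w * (x - 1) := by
    rw [Real.rpow_sub_one hF.ne']
    field
  have hGF : G * F ^ (-β + α - 1) * (x * F - F) ≤ c * (w * (x - 1)) := by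
    calc G * F ^ (-β + α - 1) * (x * F - F)
        ≤ c * F ^ (-α) * F ^ (-β + α - 1) * (x * F - F) := by
          gcongr
      _ = c * (F ^ (-β - 1) * (x * F - F)) := by
          rw [mul_assoc c, ← Real.rpow_add hF]
          ring_nf
      _ = c * (w * (x - 1)) := by rw [hFβ]
  have hcoeff : 0 ≤ c * ((β - α) / β) * w :=
    mul_nonneg (mul_nonneg hc (div_nonneg (sub_nonneg.2 hαβ) hβ.le)) (Real.rpow_nonneg hF.le _)
  have htangent := mul_le_mul_of_nonneg_left (mul_sub_one_add_le_rpow_mul_rpow_neg hx0 hα hβ) hcoeff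
  have hGF' := mul_le_mul_of_nonneg_left hGF (sub_nonneg.2 hαβ)
  have hcancel : (β - α) / β * β = β - α := div_mul_cancel₀ _ hβ.ne'
  rw [hfF, mul_assoc (-β), hFβ]
  linear_combination htangent + hGF' - c * w * (x - 1) * hcancel

theorem mul_rpow_sub_mul_rpow_le {F G : ℝ} (hα : 0 ≤ α) (hαβ : α ≤ β) (hβ : 0 < β) (hc : 0 ≤ c)
    (hF : 0 < F) (hG : G ≤ c * F ^ (-α)) :
    G * F ^ (-β + α) - c * ((β - α) / β) * (1 + α / (β + 1)) * F ^ (-β) ≤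
      c * (α / β) * F ^ (-β) := by
  have hGF : G * F ^ (-β + α) ≤ c * F ^ (-β) :=
    calc G * F ^ (-β + α) ≤ c * F ^ (-α) * F ^ (-β + α) := by gcongr
      _ = c * F ^ (-β) := by rw [mul_assoc, ← Real.rpow_add hF, neg_add_cancel_comm_assoc]
  have hrest : 0 ≤ c * ((β - α) / β) * (α / (β + 1)) * F ^ (-β) := by
    have := sub_nonneg.2 hαβ
    positivity
  have hsplit : (β - α) / β = 1 - α / β := by rw [sub_div, div_self hβ.ne']
  rw [hsplit] at hrest ⊢
  linear_combination hGF + hrest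

theorem le_rpow_mul_rpow_of_mul_rpow_le {A B M r : ℝ} (hA : 0 < A) (hB : 0 ≤ B) (hr : 0 < r)
    (h : A * B ^ r ≤ M) : B ≤ M ^ (1 / r) * A ^ (-(1 / r)) := by
  have hM : 0 ≤ M := (by positivity : 0 ≤ A * B ^ r).trans h
  calc B = (B ^ r) ^ (1 / r) := by rw [one_div, Real.rpow_rpow_inv hB hr.ne']
    _ ≤ (M / A) ^ (1 / r) := by
      gcongr
      exact (le_div_iff₀' hA).2 h
    _ = M ^ (1 / r) * A ^ (-(1 / r)) := by
      rw [Real.div_rpow hM hA.le, Real.rpow_neg hA.le, div_eq_mul_inv]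

end PointwiseInequality

section WeightedInequality

variable {a c ε κ α β T : ℝ} {f : ℝ → ℝ}

theorem hasDerivAt_mul_mul_rpow {F G : ℝ → ℝ} {f₀ g₀ r s : ℝ} (hs : s ≠ 0) (hF : F s ≠ 0)
    (hderivF : HasDerivAt F ((f₀ - F s) / s) s) (hderivG : HasDerivAt G ((g₀ - G s) / s) s) :
    HasDerivAt (fun x ↦ x * G x * F x ^ r)
      (g₀ * F s ^ r + r * G s * F s ^ (r - 1) * (f₀ - F s)) s := by
  refine (((hasDerivAt_id s).fun_mul hderivG).fun_mul
    (hderivF.rpow_const (p := r) (Or.inl hF))).congr_deriv ?_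
  simp only [id]
  field

/-- The potential `s G F^(α - β) - κ s F^(-β)`, where `F` and `G` are the Hardy averages of `f` and
`f^(-α)`. Its derivative controls the integrand `f^(-α) F^(α - β)` of the weighted inequality. -/
noncomputable def hardyPotential (α β κ : ℝ) (f : ℝ → ℝ) (s : ℝ) : ℝ :=
  s * hardyAverage (fun x ↦ f x ^ (-α)) s * hardyAverage f s ^ (-β + α) -
    κ * (s * hardyAverage f s ^ (-β))

theorem absolutelyContinuousOnInterval_hardyPotential (ha : 0 < a) (haT : a ≤ T)
    (hf : IntervalIntegrable f volume 0 T)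
    (hg : IntervalIntegrable (fun x ↦ f x ^ (-α)) volume 0 T)
    (hpos : ∀ s ∈ uIcc a T, 0 < hardyAverage f s) :
    AbsolutelyContinuousOnInterval (hardyPotential α β κ f) a T := by
  have hF := absolutelyContinuousOnInterval_hardyAverage ha haT hf
  have hid : AbsolutelyContinuousOnInterval (fun s ↦ s) a T :=
    contDiffOn_id.absolutelyContinuousOnInterval
  exact ((hid.fun_mul (absolutelyContinuousOnInterval_hardyAverage ha haT hg)).fun_mul
    (absolutelyContinuousOnInterval_rpow_const hF hpos _)).fun_sub
      ((hid.fun_mul (absolutelyContinuousOnInterval_rpow_const hF hpos _)).const_mul κ)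

theorem ae_hasDerivAt_hardyPotential (hf : IntervalIntegrable f volume 0 T)
    (hg : IntervalIntegrable (fun x ↦ f x ^ (-α)) volume 0 T)
    (hpos : ∀ s ∈ Ioc 0 T, 0 < hardyAverage f s) :
    ∀ᵐ s, s ∈ Ioc 0 T → HasDerivAt (hardyPotential α β κ f)
      ((f s ^ (-α) * hardyAverage f s ^ (-β + α) +
        (-β + α) * hardyAverage (fun x ↦ f x ^ (-α)) s * hardyAverage f s ^ (-β + α - 1) *
          (f s - hardyAverage f s)) -
        κ * (hardyAverage f s ^ (-β) +
          -β * hardyAverage f s ^ (-β - 1) * (f s - hardyAverage f s))) s := by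
  filter_upwards [ae_hasDerivAt_hardyAverage hf, ae_hasDerivAt_hardyAverage hg]
    with s hderivF hderivG hs
  have hs0 : s ≠ 0 := hs.1.ne'
  have hF0 := (hpos s hs).ne'
  have hright := hasDerivAt_mul_mul_rpow (G := fun _ ↦ 1) (g₀ := 1) (r := -β) hs0 hF0 (hderivF hs)
    (by simpa using hasDerivAt_const s 1)
  simp only [mul_one, one_mul] at hright
  exact (hasDerivAt_mul_mul_rpow hs0 hF0 (hderivF hs) (hderivG hs)).sub (hright.const_mul κ)

theorem integral_rpow_mul_hardyAverage_rpow_le (hα : 0 ≤ α) (hαβ : α ≤ β) (hβ : 0 < β)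
    (hc : 0 ≤ c) (ha : 0 < a) (haT : a ≤ T) (hf : IntervalIntegrable f volume 0 T)
    (hg : IntervalIntegrable (fun x ↦ f x ^ (-α)) volume 0 T)
    (hpos : ∀ x ∈ Ioo 0 T, 0 < f x) (hHf : ∀ s ∈ Ioo a T, hardyAverage f s ≤ f s)
    (hG : ∀ s ∈ Icc a T,
      hardyAverage (fun x ↦ f x ^ (-α)) s ≤ c * hardyAverage f s ^ (-α)) :
    (1 - (1 + 1 / β) ^ α * ((β - α) / β) * c) *
        ∫ s in a..T, f s ^ (-α) * hardyAverage f s ^ (-β + α) ≤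
      T * (c * (α / β) * hardyAverage f T ^ (-β)) +
        c * ((β - α) / β) * (1 + α / (β + 1)) * (a * hardyAverage f a ^ (-β)) := by
  set F := hardyAverage f
  set κ := c * ((β - α) / β) * (1 + α / (β + 1))
  have hF : ∀ s ∈ Ioc 0 T, 0 < F s := fun s ↦ hardyAverage_pos hf hpos
  have hF_uIcc : ∀ s ∈ uIcc a T, 0 < F s := fun s hs ↦ by
    rw [uIcc_of_le haT] at hs
    exact hF s ⟨ha.trans_le hs.1, hs.2⟩
  have hint : IntervalIntegrable (fun s ↦ f s ^ (-α) * F s ^ (-β + α)) volume a T :=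
    (hg.mono_set (uIcc_subset_uIcc_right (Icc_subset_uIcc ⟨ha.le, haT⟩))).mul_continuousOn <|
      (absolutelyContinuousOnInterval_hardyAverage ha haT hf).continuousOn.rpow_const
        fun s hs ↦ Or.inl (hF_uIcc s hs).ne'
  have hderiv : ∀ᵐ s, s ∈ Ioo a T →
      (1 - (1 + 1 / β) ^ α * ((β - α) / β) * c) * (f s ^ (-α) * F s ^ (-β + α)) ≤
        deriv (hardyPotential α β κ f) s := by
    filter_upwards [ae_hasDerivAt_hardyPotential hf hg hF] with s hs hs_mem
    have hs0 : s ∈ Ioc 0 T := ⟨ha.trans hs_mem.1, hs_mem.2.le⟩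
    rw [(hs hs0).deriv]
    exact mul_rpow_mul_rpow_le hα hαβ hβ hc (hF s hs0) (hHf s hs_mem)
      (hG s (Ioo_subset_Icc_self hs_mem))
  have hright : hardyPotential α β κ f T ≤ T * (c * (α / β) * F T ^ (-β)) := by
    have hT : 0 < T := ha.trans_le haT
    have hbound := mul_le_mul_of_nonneg_left (mul_rpow_sub_mul_rpow_le hα hαβ hβ hc
      (hF T (right_mem_Ioc.2 hT)) (hG T (right_mem_Icc.2 haT))) hT.le
    rw [hardyPotential]
    linear_combination hbound
  have hleft : -(κ * (a * F a ^ (-β))) ≤ hardyPotential α β κ f a := by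
    have hGa : 0 ≤ hardyAverage (fun x ↦ f x ^ (-α)) a := hardyAverage_nonneg
      (fun x hx ↦ (Real.rpow_pos_of_pos (hpos x hx) _).le) ⟨ha.le, haT⟩
    rw [hardyPotential, neg_le_sub_iff_le_add, le_add_iff_nonneg_left]
    exact mul_nonneg (mul_nonneg ha.le hGa) (Real.rpow_pos_of_pos (hF a ⟨ha, haT⟩) _).le
  have hFTC := integral_le_sub_of_ae_le_deriv haT
    (absolutelyContinuousOnInterval_hardyPotential ha haT hf hg hF_uIcc) (hint.const_mul _) hderiv
  rw [intervalIntegral.integral_const_mul] at hFTC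
  linear_combination hFTC + hright + hleft

theorem intervalIntegrable_rpow_mul_hardyAverage_rpow {r₁ r₂ : ℝ} (hε : 0 < ε) (hT : 0 ≤ T)
    (hf : IntervalIntegrable f volume 0 T) (hεf : ∀ x ∈ Ioo 0 T, ε ≤ f x)
    (hr₁ : r₁ ≤ 0) (hr₂ : r₂ ≤ 0) :
    IntervalIntegrable (fun s ↦ f s ^ r₁ * hardyAverage f s ^ r₂) volume 0 T := by
  have hfr : IntervalIntegrable (fun x ↦ f x ^ r₁) volume 0 T :=
    intervalIntegrable_rpow_of_le hε hT hf.1.aestronglyMeasurable hεf hr₁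
  have hF : AEStronglyMeasurable (hardyAverage f) (volume.restrict (Ioc 0 T)) :=
    (continuousOn_hardyAverage hf).aestronglyMeasurable measurableSet_Ioc
  have hεF : ∀ s ∈ Ioc 0 T, ε ≤ hardyAverage f s := fun s ↦ le_hardyAverage hf hεf
  rw [intervalIntegrable_iff_integrableOn_Ioc_of_le hT] at hfr ⊢
  refine hfr.mul_bdd (c := ε ^ r₂) (hF.aemeasurable.pow_const r₂).aestronglyMeasurable ?_
  refine (ae_restrict_iff' measurableSet_Ioc).2 (.of_forall fun s hs ↦ ?_)
  rw [Real.norm_of_nonneg (Real.rpow_nonneg (hε.le.trans (hεF s hs)) _)]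
  exact Real.rpow_le_rpow_of_nonpos hε (hεF s hs) hr₂

theorem tendsto_mul_hardyAverage_rpow_nhdsGT_zero {r : ℝ} (hε : 0 < ε) (hT : 0 < T)
    (hf : IntervalIntegrable f volume 0 T) (hεf : ∀ x ∈ Ioo 0 T, ε ≤ f x) (hr : r ≤ 0) :
    Tendsto (fun s ↦ s * hardyAverage f s ^ r) (𝓝[>] 0) (𝓝 0) := by
  have hlim : Tendsto (fun s : ℝ ↦ s * ε ^ r) (𝓝[>] 0) (𝓝 0) := by
    simpa using (tendsto_id.mul_const (ε ^ r)).mono_left (nhdsWithin_le_nhds (a := (0 : ℝ)))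
  refine squeeze_zero' ?_ ?_ hlim <;> filter_upwards [Ioc_mem_nhdsGT hT] with s hs
  · exact mul_nonneg hs.1.le (Real.rpow_nonneg (hε.le.trans (le_hardyAverage hf hεf hs)) _)
  · exact mul_le_mul_of_nonneg_left
      (Real.rpow_le_rpow_of_nonpos hε (le_hardyAverage hf hεf hs) hr) hs.1.le

theorem hardyAverage_rpow_mul_hardyAverage_rpow_le (hα : 0 ≤ α) (hαβ : α ≤ β) (hβ : 0 < β)
    (hc : 0 ≤ c) (hε : 0 < ε) (hT : 0 < T)
    (hf : IntervalIntegrable f volume 0 T) (hεf : ∀ x ∈ Ioo 0 T, ε ≤ f x)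
    (hHf : ∀ s ∈ Ioo 0 T, hardyAverage f s ≤ f s)
    (hG : ∀ s ∈ Ioc 0 T,
      hardyAverage (fun x ↦ f x ^ (-α)) s ≤ c * hardyAverage f s ^ (-α)) :
    (1 - (1 + 1 / β) ^ α * ((β - α) / β) * c) *
        hardyAverage (fun s ↦ f s ^ (-α) * hardyAverage f s ^ (-β + α)) T ≤
      c * (α / β) * hardyAverage f T ^ (-β) := by
  set κ := c * ((β - α) / β) * (1 + α / (β + 1))
  set h := fun s ↦ f s ^ (-α) * hardyAverage f s ^ (-β + α)
  have hint : IntegrableOn h (uIcc 0 T) :=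
    (intervalIntegrable_iff').1 <|
      intervalIntegrable_rpow_mul_hardyAverage_rpow hε hT.le hf hεf (by linarith) (by linarith)
  have hlim_integral : Tendsto (fun a ↦ ∫ s in a..T, h s) (𝓝[>] 0) (𝓝 (∫ s in 0..T, h s)) := by
    rw [← nhdsWithin_Ioc_eq_nhdsGT hT]
    exact (continuousOn_primitive_interval_left hint 0 left_mem_uIcc).mono_left
      (nhdsWithin_mono _ (Ioc_subset_Icc_self.trans Icc_subset_uIcc))
  have hlim_left := tendsto_mul_hardyAverage_rpow_nhdsGT_zero hε hT hf hεf (neg_nonpos.2 hβ.le)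
  have hlimit := le_of_tendsto_of_tendsto (hlim_integral.const_mul
      (1 - (1 + 1 / β) ^ α * ((β - α) / β) * c))
    ((hlim_left.const_mul κ).const_add (T * (c * (α / β) * hardyAverage f T ^ (-β)))) <| by
      filter_upwards [Ioc_mem_nhdsGT hT] with a ha
      exact integral_rpow_mul_hardyAverage_rpow_le hα hαβ hβ hc ha.1 ha.2 hf
        (intervalIntegrable_rpow_of_le hε hT.le hf.1.aestronglyMeasurable hεf (by linarith))
        (fun x hx ↦ hε.trans_le (hεf x hx)) (fun s hs ↦ hHf s ⟨ha.1.trans hs.1, hs.2⟩)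
        fun s hs ↦ hG s ⟨ha.1.trans_le hs.1, hs.2⟩
  rw [mul_zero, add_zero, ← mul_hardyAverage hT.ne', mul_left_comm] at hlimit
  exact le_of_mul_le_mul_left hlimit hT

end WeightedInequality

section Muckenhoupt

variable {p q M T ε : ℝ} {f : ℝ → ℝ}

/-- The Muckenhoupt condition `A_q` with constant `M` on each of the intervals `(0, t)`,
`0 < t ≤ T`. -/
def MuckenhouptCondition (q M T : ℝ) (f : ℝ → ℝ) : Prop :=
  ∀ t ∈ Ioc 0 T, hardyAverage f t *
    hardyAverage (fun y ↦ f y ^ (-(1 / (q - 1)))) t ^ (q - 1) ≤ M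

theorem intervalIntegrable_of_hardyAverage_mul_rpow_le {g : ℝ → ℝ} {r : ℝ} (hT : 0 < T)
    (hr : 0 ≤ r) (hf : ∀ s ∈ Ioo 0 T, IntervalIntegrable f volume 0 s)
    (hf_nonneg : ∀ x ∈ Ioo 0 T, 0 ≤ f x) (hg : IntervalIntegrable g volume 0 T)
    (hg_pos : ∀ x ∈ Ioo 0 T, 0 < g x)
    (hM : ∀ s ∈ Ioo 0 T, hardyAverage f s * hardyAverage g s ^ r ≤ M) :
    IntervalIntegrable f volume 0 T := by
  have hT2 : 0 < T / 2 := half_pos hT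
  set m := 1 / T * ∫ x in (0 : ℝ)..T / 2, g x
  have hg_integral : 0 < ∫ x in (0 : ℝ)..T / 2, g x := intervalIntegral_pos_of_pos_on
    (intervalIntegrable_of_mem_Ioc hg ⟨hT2, half_le_self hT.le⟩)
    (fun x hx ↦ hg_pos x ⟨hx.1, hx.2.trans (half_lt_self hT)⟩) hT2
  have hm : 0 < m := mul_pos (one_div_pos.2 hT) hg_integral
  refine intervalIntegrable_of_forall_integral_le (C := T * (M / m ^ r)) hT2.le
    (half_lt_self hT) (fun s hs ↦ hf s ⟨hT2.trans hs.1, hs.2⟩) hf_nonneg fun s hs ↦ ?_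
  have hs0 : 0 < s := hT2.trans hs.1
  have hmg : m ≤ hardyAverage g s := by
    refine mul_le_mul (one_div_le_one_div_of_le hs0 hs.2.le) ?_ hg_integral.le
      (one_div_nonneg.2 hs0.le)
    refine integral_mono_interval le_rfl hT2.le hs.1.le ?_
      (intervalIntegrable_of_mem_Ioc hg ⟨hs0, hs.2.le⟩)
    exact (ae_restrict_iff' measurableSet_Ioc).2 <| .of_forall fun x hx ↦
      (hg_pos x ⟨hx.1, hx.2.trans_lt hs.2⟩).le
  have hf0 : 0 ≤ hardyAverage f s := hardyAverage_nonneg hf_nonneg ⟨hs0.le, hs.2.le⟩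
  have hfM : hardyAverage f s ≤ M / m ^ r := by
    rw [le_div_iff₀ (Real.rpow_pos_of_pos hm r)]
    exact (by gcongr : _ ≤ hardyAverage f s * hardyAverage g s ^ r).trans (hM s ⟨hs0, hs.2⟩)
  rw [← mul_hardyAverage hs0.ne']
  exact mul_le_mul hs.2.le hfM hf0 hT.le

theorem rpow_mul_rpow_neg_div (hM : 0 < M) (hp : p - 1 ≠ 0) (hq : q - 1 ≠ 0) :
    M ^ (1 / (p - 1)) * (M ^ (1 / (q - 1))) ^ (-((q - p) / (p - 1))) = M ^ (1 / (q - 1)) := by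
  rw [← Real.rpow_mul hM.le, ← Real.rpow_add hM]
  congr 1
  field

theorem key_inequality_two_general (hp : 1 < p) (hpq : p ≤ q) (hT : 0 < T) (hε : 0 < ε)
    (hf : ∀ s ∈ Ioo 0 T, IntervalIntegrable f volume 0 s) (hεf : ∀ x ∈ Ioo 0 T, ε ≤ f x)
    (hHf : ∀ s ∈ Ioo 0 T, hardyAverage f s ≤ f s) (hAq : MuckenhouptCondition q M T f) :
    (1 - p ^ (1 / (q - 1)) * ((q - p) / (q - 1)) * M ^ (1 / (q - 1))) *
        hardyAverage (fun s ↦ f s ^ (-(1 / (q - 1))) *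
          hardyAverage f s ^ (-(1 / (p - 1)) + 1 / (q - 1))) T ≤
      M ^ (1 / (p - 1)) * ((p - 1) / (q - 1)) *
        (M ^ (1 / (q - 1))) ^ (-((q - p) / (p - 1))) * hardyAverage f T ^ (-(1 / (p - 1))) := by
  have hp1 : 0 < p - 1 := sub_pos.2 hp
  have hq1 : 0 < q - 1 := hp1.trans_le (sub_le_sub_right hpq 1)
  set α := 1 / (q - 1) with hα
  set β := 1 / (p - 1) with hβ
  have hα0 : 0 < α := one_div_pos.2 hq1
  have hβ0 : 0 < β := one_div_pos.2 hp1
  have hαβ : α ≤ β := one_div_le_one_div_of_le hp1 (sub_le_sub_right hpq 1)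
  have hg : IntervalIntegrable (fun x ↦ f x ^ (-α)) volume 0 T :=
    intervalIntegrable_rpow_of_le hε hT.le
      (aestronglyMeasurable_of_forall_intervalIntegrable hT hf) hεf (neg_nonpos.2 hα0.le)
  have hg_pos : ∀ x ∈ Ioo 0 T, 0 < f x ^ (-α) := fun x hx ↦
    Real.rpow_pos_of_pos (hε.trans_le (hεf x hx)) _
  have hfT : IntervalIntegrable f volume 0 T :=
    intervalIntegrable_of_hardyAverage_mul_rpow_le hT hq1.le hf
      (fun x hx ↦ hε.le.trans (hεf x hx)) hg hg_pos fun s hs ↦ hAq s ⟨hs.1, hs.2.le⟩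
  have hF : ∀ s ∈ Ioc 0 T, 0 < hardyAverage f s := fun s ↦
    hardyAverage_pos hfT fun x hx ↦ hε.trans_le (hεf x hx)
  have hG : ∀ s ∈ Ioc 0 T, 0 < hardyAverage (fun x ↦ f x ^ (-α)) s := fun s ↦
    hardyAverage_pos hg hg_pos
  have hT_mem : T ∈ Ioc 0 T := right_mem_Ioc.2 hT
  have hM : 0 < M :=
    (mul_pos (hF T hT_mem) (Real.rpow_pos_of_pos (hG T hT_mem) _)).trans_le (hAq T hT_mem)
  have hmain := hardyAverage_rpow_mul_hardyAverage_rpow_le hα0.le hαβ hβ0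
    (Real.rpow_nonneg hM.le α) hε hT hfT hεf hHf fun s hs ↦
      le_rpow_mul_rpow_of_mul_rpow_le (hF s hs) (hG s hs).le hq1 (hAq s hs)
  have hp_eq : 1 + 1 / β = p := by rw [hβ, one_div_one_div, add_sub_cancel]
  have hratio : α / β = (p - 1) / (q - 1) := by rw [hα, hβ]; field
  have hratio_sub : (β - α) / β = (q - p) / (q - 1) := by rw [hα, hβ]; field
  rw [hp_eq, hratio_sub, hratio] at hmain
  rwa [mul_right_comm (M ^ β), rpow_mul_rpow_neg_div hM hp1.ne' hq1.ne']

end Muckenhoupt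

/-- **Inequality (3.5).** Let `1 < p < q`, `M ≥ 1`, and let `f : [0,1) → (0,∞)` be
non-decreasing, bounded below by `ε > 0`, satisfying the `A_q` condition with constant
`M` on each `(0,t)`, `t ∈ (0,1]`. With `c = M^{1/(q-1)}` and
`K = 1 − p^{1/(q-1)}((q−p)/(q−1))c`, for every `t ∈ (0,1]`,
`K (1/t) ∫_0^t f(s)^{-1/(q-1)} ((1/s)∫_0^s f)^{-1/(p-1)+1/(q-1)} ds
  ≤ M^{1/(p-1)} ((p−1)/(q−1)) c^{-(q-p)/(p-1)} ((1/t)∫_0^t f)^{-1/(p-1)}`. -/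
theorem key_inequality_two (p q ε M : ℝ) (hp : 1 < p) (hpq : p < q) (hε : 0 < ε)
    (hM : 1 ≤ M) (f : ℝ → ℝ) (hfm : Measurable f)
    (hmono : MonotoneOn f (Set.Ico 0 1))
    (hlb : ∀ x ∈ Set.Ico (0 : ℝ) 1, ε ≤ f x)
    (hpos : ∀ x ∈ Set.Ico (0 : ℝ) 1, 0 < f x)
    (hAq : ∀ t ∈ Set.Ioc (0 : ℝ) 1,
      ((1 / t) * ∫ y in (0 : ℝ)..t, f y) *
        ((1 / t) * ∫ y in (0 : ℝ)..t, f y ^ (-(1 / (q - 1)))) ^ (q - 1) ≤ M) :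
    ∀ t ∈ Set.Ioc (0 : ℝ) 1,
      (1 - p ^ (1 / (q - 1)) * ((q - p) / (q - 1)) * M ^ (1 / (q - 1))) *
          ((1 / t) * ∫ s in (0 : ℝ)..t, f s ^ (-(1 / (q - 1))) *
            ((1 / s) * ∫ y in (0 : ℝ)..s, f y) ^ (-(1 / (p - 1)) + 1 / (q - 1)))
        ≤ M ^ (1 / (p - 1)) * ((p - 1) / (q - 1)) *
            (M ^ (1 / (q - 1))) ^ (-((q - p) / (p - 1))) *
            ((1 / t) * ∫ y in (0 : ℝ)..t, f y) ^ (-(1 / (p - 1))) := by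
  intro t ht
  have hmono_Icc : ∀ s ∈ Ioo 0 t, MonotoneOn f (Icc 0 s) := fun s hs ↦
    hmono.mono (Icc_subset_Ico_right (hs.2.trans_le ht.2))
  exact key_inequality_two_general hp hpq.le ht.1 hε
    (fun s hs ↦ MonotoneOn.intervalIntegrable (by rw [uIcc_of_le hs.1.le]; exact hmono_Icc s hs))
    (fun x hx ↦ hlb x ⟨hx.1.le, hx.2.trans_le ht.2⟩)
    (fun s hs ↦ hardyAverage_le_of_monotoneOn hs.1 (hmono_Icc s hs))
    fun s hs ↦ hAq s ⟨hs.1, hs.2.trans ht.2⟩
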